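/- In the coupon collector process with B distinct coupons and replacement parameter K with 1 ≤ K ≤ B, where coupons are drawn independently and uniformly at random, the expected value of the stopping time T_{B,K} (the first time n at which at least B − K distinct coupons have appeared among the first n draws) equals B·(H(B) − H(K)). Consequently the mean number of cards obtained by a single collector who buys until only K coupons are missing and then purchases those K missing coupons directly is B·(H(B) − H(K)) + K, so the factor f = (E[T_{B,K}] + K)/B equals H(B) − H(K) + K/B. -/

import Mathlib

open MeasureTheory ProbabilityTheory
open scoped ENNReal

/-- The `n`-th harmonic number `H(n) = ∑_{i=1}^n 1/i`, as a real number. -/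
noncomputable def H (n : ℕ) : ℝ := ∑ i ∈ Finset.Icc 1 n, (1 : ℝ) / i

/-- The uniform probability measure on `Fin B`. -/
noncomputable def uniformFin (B : ℕ) : Measure (Fin B) :=
  (B : ℝ≥0∞)⁻¹ • Measure.count

/-- The stopping time `T_{B,K}`: the least `n` such that at least `B - K` distinct coupons
appear among the first `n` draws `ω 0, …, ω (n-1)`. -/
noncomputable def collectTime (B K : ℕ) (ω : ℕ → Fin B) : ℕ :=
  sInf {n : ℕ | B - K ≤ (Finset.image ω (Finset.range n)).card}

/-!
Let `D n` be the number of distinct coupons among the first `n` draws. The waiting time for `m`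
distinct coupons is the number of `n` with `D n < m`, so its mean is `∑ j < m, ∑ n, P(D n = j)`.
By independence, `D` leaves the level `j` at each draw with probability `(B - j) / B`, that is,
`P(D n ≤ j) - P(D (n + 1) ≤ j) = P(D n = j) * (B - j) / B`. Summed over `n` the left-hand side
telescopes to `1 - lim P(D n ≤ j)`, so `∑ n, P(D n = j)` converges for every `j < B`. Its terms then
tend to `0`, hence so does `P(D n ≤ j)`, and the expected time spent at level `j` is `B / (B - j)`.
-/

section Harmonic

lemma H_sub_H_pred {n : ℕ} (hn : n ≠ 0) : H n - H (n - 1) = 1 / n := by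
  obtain ⟨n, rfl⟩ := Nat.exists_eq_succ_of_ne_zero hn
  simp [H, Finset.sum_Icc_succ_top]

lemma sum_range_div_sub_eq_mul_H_sub_H {n m : ℕ} (hm : m ≤ n) :
    ∑ j ∈ Finset.range m, (n : ℝ) / (n - j) = n * (H n - H (n - m)) := by
  have telescope := Finset.sum_range_sub' (fun j ↦ H (n - j)) m
  rw [Nat.sub_zero] at telescope
  rw [← telescope, Finset.mul_sum]
  refine Finset.sum_congr rfl fun j hj ↦ ?_
  have hjn : j < n := (Finset.mem_range.1 hj).trans_le hm
  rw [← Nat.sub_sub, H_sub_H_pred (Nat.sub_ne_zero_of_lt hjn), Nat.cast_sub hjn.le, mul_one_div]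

end Harmonic

section Telescoping

open Filter Topology

variable {a : ℕ → ℝ}

lemma summable_sub_succ_of_antitone (ha : Antitone a) {b : ℝ} (hb : ∀ n, b ≤ a n) :
    Summable fun n ↦ a n - a (n + 1) := by
  refine summable_of_sum_range_le (c := a 0 - b) (fun n ↦ sub_nonneg.2 (ha n.le_succ)) fun n ↦ ?_
  rw [Finset.sum_range_sub']
  exact sub_le_sub_left (hb n) _

lemma hasSum_sub_succ_of_antitone (ha : Antitone a) {l : ℝ} (hl : Tendsto a atTop (𝓝 l)) :
    HasSum (fun n ↦ a n - a (n + 1)) (a 0 - l) := by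
  rw [(summable_sub_succ_of_antitone ha (ha.le_of_tendsto hl)).hasSum_iff_tendsto_nat]
  simpa only [Finset.sum_range_sub'] using hl.const_sub (a 0)

end Telescoping

section Probability

variable {Ω : Type*} [MeasurableSpace Ω] {μ : Measure Ω}

lemma lintegral_natCast_eq_tsum_measure_lt {T : Ω → ℕ} (hT : AEMeasurable T μ) :
    ∫⁻ ω, (T ω : ℝ≥0∞) ∂μ = ∑' n, μ {ω | n < T ω} := by
  have layer (n : ℕ) : NullMeasurableSet {ω | n < T ω} μ :=
    hT.nullMeasurableSet_preimage measurableSet_Ioi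
  have natCast_eq_tsum (ω : Ω) :
      (T ω : ℝ≥0∞) = ∑' n, Set.indicator {ω | n < T ω} (fun _ ↦ (1 : ℝ≥0∞)) ω := by
    rw [tsum_eq_sum (s := Finset.range (T ω)) (by simp)]
    simp [Set.indicator_apply, Finset.filter_true_of_mem]
  simp_rw [natCast_eq_tsum]
  rw [lintegral_tsum fun n ↦ aemeasurable_const.indicator₀ (layer n)]
  exact tsum_congr fun n ↦ lintegral_indicator_one₀ (layer n)

lemma integral_natCast_eq_tsum_measureReal_lt [IsFiniteMeasure μ] {T : Ω → ℕ}
    (hT : AEMeasurable T μ) :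
    ∫ ω, (T ω : ℝ) ∂μ = ∑' n, μ.real {ω | n < T ω} := by
  have toReal_lintegral := integral_toReal (μ := μ) (f := fun ω ↦ (T ω : ℝ≥0∞))
    (measurable_from_top.comp_aemeasurable hT) (ae_of_all _ fun ω ↦ ENNReal.natCast_lt_top _)
  simp only [ENNReal.toReal_natCast] at toReal_lintegral
  rw [toReal_lintegral, lintegral_natCast_eq_tsum_measure_lt hT,
    ENNReal.tsum_toReal_eq fun n ↦ measure_ne_top μ _]
  rfl

lemma measure_mem_and_mem_eq_mul_of_indepFun [IsFiniteMeasure μ] {β γ : Type*}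
    [MeasurableSpace β] [MeasurableSpace γ] {Y : Ω → β} {Z : Ω → γ} (hYZ : IndepFun Y Z μ)
    (hY : Measurable Y) (hZ : Measurable Z) {A : Set β} (hA : MeasurableSet A)
    {R : Set (β × γ)} (hR : MeasurableSet R) {c : ℝ≥0∞}
    (hc : ∀ y ∈ A, μ {ω | (y, Z ω) ∈ R} = c) :
    μ {ω | Y ω ∈ A ∧ (Y ω, Z ω) ∈ R} = μ {ω | Y ω ∈ A} * c := by
  have hS : MeasurableSet {p : β × γ | p.1 ∈ A ∧ p ∈ R} := (measurable_fst hA).inter hR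
  have section_measure (y : β) :
      μ.map Z (Prod.mk y ⁻¹' {p | p.1 ∈ A ∧ p ∈ R}) = A.indicator (fun _ ↦ c) y := by
    rw [Measure.map_apply hZ (measurable_prodMk_left hS)]
    by_cases hy : y ∈ A
    · simpa [hy] using hc y hy
    · simp [hy]
  calc
    μ {ω | Y ω ∈ A ∧ (Y ω, Z ω) ∈ R}
      = μ.map (fun ω ↦ (Y ω, Z ω)) {p | p.1 ∈ A ∧ p ∈ R} :=
        (Measure.map_apply (hY.prodMk hZ) hS).symm
    _ = ∫⁻ y, A.indicator (fun _ ↦ c) y ∂μ.map Y := by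
        rw [hYZ.map_prod_eq_prod_map_map hY.aemeasurable hZ.aemeasurable, Measure.prod_apply hS]
        simp only [section_measure]
    _ = μ {ω | Y ω ∈ A} * c := by
        rw [lintegral_indicator_const hA, Measure.map_apply hY hA, mul_comm]
        rfl

lemma measure_notMem_of_map_eq_uniformOn {α : Type*} [Fintype α] [MeasurableSpace α]
    [MeasurableSingletonClass α] {Z : Ω → α} (hZ : Measurable Z)
    (hUnif : μ.map Z = uniformOn Set.univ) (s : Finset α) :
    μ {ω | Z ω ∉ s} = (Fintype.card α - s.card : ℕ) / Fintype.card α := by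
  classical
  have map_compl : μ.map Z (sᶜ : Finset α) = μ {ω | Z ω ∉ s} := by
    rw [Measure.map_apply hZ sᶜ.measurableSet]
    simp [Set.preimage]
  rw [← map_compl, hUnif, uniformOn_univ, Measure.count_apply_finset, Finset.card_compl]

end Probability

section Seen

variable {α : Type*} [DecidableEq α]

/-- The set of distinct values among the first `n` terms `x 0, …, x (n - 1)` of a sequence: the
coupons collected in the first `n` draws. -/
def seen (x : ℕ → α) (n : ℕ) : Finset α := (Finset.range n).image x

/-- The number of terms of the sequence `x` that have to be read to see `m` distinct values. As an
infimum in `ℕ`, it is `0` if `x` takes fewer than `m` values. -/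
noncomputable def waitingTime (m : ℕ) (x : ℕ → α) : ℕ := sInf {n | m ≤ (seen x n).card}

lemma seen_succ (x : ℕ → α) (n : ℕ) : seen x (n + 1) = insert (x n) (seen x n) := by
  simp [seen, Finset.range_add_one, Finset.image_insert]

lemma monotone_seen (x : ℕ → α) : Monotone (seen x) :=
  fun _ _ h ↦ Finset.image_subset_image (Finset.range_mono h)

lemma monotone_card_seen (x : ℕ → α) : Monotone fun n ↦ (seen x n).card :=
  Finset.card_mono.comp (monotone_seen x)

lemma lt_waitingTime_iff {m : ℕ} {x : ℕ → α} (hx : ∃ n, m ≤ (seen x n).card) {n : ℕ} :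
    n < waitingTime m x ↔ (seen x n).card < m := by
  refine ⟨fun hn ↦ lt_of_not_ge fun h ↦ hn.not_ge (Nat.sInf_le h), fun hn ↦ ?_⟩
  have attained : m ≤ (seen x (waitingTime m x)).card := Nat.sInf_mem hx
  exact (monotone_card_seen x).reflect_lt (hn.trans_le attained)

variable [MeasurableSpace α] [MeasurableSingletonClass α]

lemma measurable_seen (n : ℕ) : Measurable fun x : ℕ → α ↦ seen x n := by
  refine measurable_finset_iff.2 fun a ↦ ?_
  simp only [seen, Finset.mem_image, Finset.mem_range]
  measurability

variable [Countable α]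

lemma measurable_card_seen (n : ℕ) : Measurable fun x : ℕ → α ↦ (seen x n).card :=
  (Measurable.of_discrete (f := Finset.card)).comp (measurable_seen n)

lemma measurable_waitingTime (m : ℕ) : Measurable (waitingTime m : (ℕ → α) → ℕ) := by
  refine measurable_of_Ioi fun n ↦ ?_
  have preimage_Ioi : (waitingTime m : (ℕ → α) → ℕ) ⁻¹' Set.Ioi n =
      (⋃ k, {x | m ≤ (seen x k).card}) ∩ {x | (seen x n).card < m} := by
    ext x
    by_cases hx : ∃ k, m ≤ (seen x k).card
    · simp [hx, lt_waitingTime_iff]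
    · simp [waitingTime, not_exists.1 hx]
  rw [preimage_Ioi]
  exact (MeasurableSet.iUnion fun k ↦ measurable_card_seen k measurableSet_Ici).inter
    (measurable_card_seen n measurableSet_Iio)

end Seen

section Collector

open Filter Topology

variable {Ω α : Type*} [MeasurableSpace Ω] {μ : Measure Ω} [DecidableEq α] {X : ℕ → Ω → α}

lemma antitone_measureReal_card_seen_le [IsFiniteMeasure μ] (j : ℕ) :
    Antitone fun n ↦ μ.real {ω | (seen (X · ω) n).card ≤ j} :=
  fun _ _ h ↦ measureReal_mono fun _ hω ↦ (monotone_card_seen _ h).trans hω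

variable [MeasurableSpace α] [MeasurableSingletonClass α]

lemma measureReal_card_seen_lt_eq_sum [IsFiniteMeasure μ] [Countable α]
    (hX : ∀ i, Measurable (X i)) (m n : ℕ) :
    μ.real {ω | (seen (X · ω) n).card < m} =
      ∑ j ∈ Finset.range m, μ.real {ω | (seen (X · ω) n).card = j} := by
  have hcard : Measurable fun ω ↦ (seen (X · ω) n).card :=
    (measurable_card_seen n).comp (measurable_pi_lambda _ hX)
  simpa [Set.preimage] using (sum_measureReal_preimage_singleton (μ := μ) (Finset.range m)
    fun j _ ↦ hcard (measurableSet_singleton j)).symm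

lemma indepFun_seen [Countable α] (hX : ∀ i, Measurable (X i)) (hIndep : iIndepFun X μ) (n : ℕ) :
    IndepFun (fun ω ↦ seen (X · ω) n) (X n) μ := by
  have past_present := hIndep.indepFun_finset (Finset.range n) {n} (by simp) hX
  have image_past (ω : Ω) :
      seen (X · ω) n = Finset.univ.image fun i : Finset.range n ↦ X i ω := by
    ext
    simp [seen]
  simp only [image_past]
  exact past_present.comp (φ := Finset.univ.image)
    (ψ := fun y : ({n} : Finset ℕ) → α ↦ y ⟨n, Finset.mem_singleton_self n⟩)
    .of_discrete (measurable_pi_apply _)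

variable [Fintype α] [IsProbabilityMeasure μ]

lemma measureReal_card_seen_eq_and_notMem (hX : ∀ i, Measurable (X i)) (hIndep : iIndepFun X μ)
    (hUnif : ∀ i, μ.map (X i) = uniformOn Set.univ) {j : ℕ} (hj : j ≤ Fintype.card α) (n : ℕ) :
    μ.real {ω | (seen (X · ω) n).card = j ∧ X n ω ∉ seen (X · ω) n} =
      μ.real {ω | (seen (X · ω) n).card = j} * ((Fintype.card α - j) / Fintype.card α) := by
  have new_coupon (s : Finset α) (hs : s.card = j) :
      μ {ω | X n ω ∉ s} = (Fintype.card α - j : ℕ) / Fintype.card α := by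
    rw [measure_notMem_of_map_eq_uniformOn (hX n) (hUnif n), hs]
  have product := measure_mem_and_mem_eq_mul_of_indepFun (indepFun_seen hX hIndep n)
    ((measurable_seen n).comp (measurable_pi_lambda _ hX)) (hX n)
    (A := {s | s.card = j}) .of_discrete (R := {p | p.2 ∉ p.1}) .of_discrete new_coupon
  simp only [Set.mem_ofPred_eq] at product
  rw [measureReal_def, product, ENNReal.toReal_mul, ENNReal.toReal_div, ENNReal.toReal_natCast,
    ENNReal.toReal_natCast, Nat.cast_sub hj, measureReal_def]

lemma measureReal_card_seen_eq_eq_sub_succ_mul (hX : ∀ i, Measurable (X i))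
    (hIndep : iIndepFun X μ) (hUnif : ∀ i, μ.map (X i) = uniformOn Set.univ) {j : ℕ}
    (hj : j < Fintype.card α) (n : ℕ) :
    μ.real {ω | (seen (X · ω) n).card = j} =
      (μ.real {ω | (seen (X · ω) n).card ≤ j} - μ.real {ω | (seen (X · ω) (n + 1)).card ≤ j}) *
        (Fintype.card α / (Fintype.card α - j)) := by
  have sdiff_eq : {ω | (seen (X · ω) n).card ≤ j} \ {ω | (seen (X · ω) (n + 1)).card ≤ j} =
      {ω | (seen (X · ω) n).card = j ∧ X n ω ∉ seen (X · ω) n} := by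
    ext ω
    by_cases hnew : X n ω ∈ seen (X · ω) n
    · simp [seen_succ, hnew]
    · simp only [Set.mem_sdiff, Set.mem_ofPred_eq, seen_succ, Finset.card_insert_of_notMem hnew,
        hnew, not_false_eq_true, and_true]
      lia
  have exit_level : μ.real {ω | (seen (X · ω) n).card ≤ j} -
      μ.real {ω | (seen (X · ω) (n + 1)).card ≤ j} =
        μ.real {ω | (seen (X · ω) n).card = j} * ((Fintype.card α - j) / Fintype.card α) := by
    rw [← measureReal_card_seen_eq_and_notMem hX hIndep hUnif hj.le, ← sdiff_eq, measureReal_sdiff]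
    · exact fun ω hω ↦ (monotone_card_seen _ n.le_succ).trans hω
    · exact (measurable_card_seen (n + 1)).comp (measurable_pi_lambda _ hX) measurableSet_Iic
  have card_ne_zero : (Fintype.card α : ℝ) ≠ 0 := Nat.cast_ne_zero.2 hj.ne_bot
  have missing_ne_zero : (Fintype.card α - j : ℝ) ≠ 0 := sub_ne_zero.2 (Nat.cast_lt.2 hj).ne'
  rw [exit_level]
  field_simp

lemma summable_measureReal_card_seen_eq (hX : ∀ i, Measurable (X i)) (hIndep : iIndepFun X μ)
    (hUnif : ∀ i, μ.map (X i) = uniformOn Set.univ) {j : ℕ} (hj : j < Fintype.card α) :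
    Summable fun n ↦ μ.real {ω | (seen (X · ω) n).card = j} := by
  simp only [measureReal_card_seen_eq_eq_sub_succ_mul hX hIndep hUnif hj]
  exact (summable_sub_succ_of_antitone (antitone_measureReal_card_seen_le j)
    fun _ ↦ measureReal_nonneg).mul_right _

lemma tendsto_measureReal_card_seen_lt (hX : ∀ i, Measurable (X i)) (hIndep : iIndepFun X μ)
    (hUnif : ∀ i, μ.map (X i) = uniformOn Set.univ) {m : ℕ} (hm : m ≤ Fintype.card α) :
    Tendsto (fun n ↦ μ.real {ω | (seen (X · ω) n).card < m}) atTop (𝓝 0) := by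
  simp only [measureReal_card_seen_lt_eq_sum hX]
  rw [← Finset.sum_const_zero (s := Finset.range m)]
  exact tendsto_finsetSum _ fun j hj ↦ (summable_measureReal_card_seen_eq hX hIndep hUnif
    ((Finset.mem_range.1 hj).trans_le hm)).tendsto_atTop_zero

lemma ae_exists_le_card_seen (hX : ∀ i, Measurable (X i)) (hIndep : iIndepFun X μ)
    (hUnif : ∀ i, μ.map (X i) = uniformOn Set.univ) {m : ℕ} (hm : m ≤ Fintype.card α) :
    ∀ᵐ ω ∂μ, ∃ n, m ≤ (seen (X · ω) n).card := by
  have never_le (n : ℕ) : μ.real {ω | ¬∃ n, m ≤ (seen (X · ω) n).card} ≤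
      μ.real {ω | (seen (X · ω) n).card < m} :=
    measureReal_mono fun _ hω ↦ not_le.1 (not_exists.1 hω n)
  have never_null := ge_of_tendsto' (tendsto_measureReal_card_seen_lt hX hIndep hUnif hm) never_le
  exact ae_iff.2 ((measureReal_eq_zero_iff).1 (never_null.antisymm measureReal_nonneg))

lemma hasSum_measureReal_card_seen_eq (hX : ∀ i, Measurable (X i)) (hIndep : iIndepFun X μ)
    (hUnif : ∀ i, μ.map (X i) = uniformOn Set.univ) {j : ℕ} (hj : j < Fintype.card α) :
    HasSum (fun n ↦ μ.real {ω | (seen (X · ω) n).card = j})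
      (Fintype.card α / (Fintype.card α - j)) := by
  have tendsto_zero := tendsto_measureReal_card_seen_lt hX hIndep hUnif (Nat.succ_le_of_lt hj)
  simp only [Nat.succ_eq_add_one, Nat.lt_succ_iff] at tendsto_zero
  have initial : μ.real {ω | (seen (X · ω) 0).card ≤ j} = 1 := by simp [seen]
  have telescope := (hasSum_sub_succ_of_antitone (antitone_measureReal_card_seen_le j)
    tendsto_zero).mul_right (Fintype.card α / (Fintype.card α - j) : ℝ)
  rw [initial, sub_zero, one_mul] at telescope
  simpa only [measureReal_card_seen_eq_eq_sub_succ_mul hX hIndep hUnif hj] using telescope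

theorem integral_waitingTime (hX : ∀ i, Measurable (X i)) (hIndep : iIndepFun X μ)
    (hUnif : ∀ i, μ.map (X i) = uniformOn Set.univ) {m : ℕ} (hm : m ≤ Fintype.card α) :
    ∫ ω, (waitingTime m (X · ω) : ℝ) ∂μ =
      Fintype.card α * (H (Fintype.card α) - H (Fintype.card α - m)) := by
  have hT : Measurable fun ω ↦ waitingTime m (X · ω) :=
    (measurable_waitingTime m).comp (measurable_pi_lambda _ hX)
  have measure_lt_waitingTime (n : ℕ) : μ.real {ω | n < waitingTime m (X · ω)} =
      μ.real {ω | (seen (X · ω) n).card < m} := by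
    refine measureReal_congr ?_
    filter_upwards [ae_exists_le_card_seen hX hIndep hUnif hm] with ω hω
    exact propext (lt_waitingTime_iff hω)
  calc
    ∫ ω, (waitingTime m (X · ω) : ℝ) ∂μ
      = ∑' n, ∑ j ∈ Finset.range m, μ.real {ω | (seen (X · ω) n).card = j} := by
        rw [integral_natCast_eq_tsum_measureReal_lt hT.aemeasurable]
        simp only [measure_lt_waitingTime, measureReal_card_seen_lt_eq_sum hX]
    _ = ∑ j ∈ Finset.range m, (Fintype.card α : ℝ) / (Fintype.card α - j) :=
        (hasSum_sum fun j hj ↦ hasSum_measureReal_card_seen_eq hX hIndep hUnif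
          ((Finset.mem_range.1 hj).trans_le hm)).tsum_eq
    _ = Fintype.card α * (H (Fintype.card α) - H (Fintype.card α - m)) :=
        sum_range_div_sub_eq_mul_H_sub_H hm

end Collector

lemma uniformFin_eq_uniformOn_univ (B : ℕ) : uniformFin B = uniformOn Set.univ := by
  simp [uniformFin, uniformOn, ProbabilityTheory.cond]

theorem coupon_collector_replacement_expectation_general {Ω α : Type*} [MeasurableSpace Ω]
    {μ : Measure Ω} [IsProbabilityMeasure μ] [Fintype α] [DecidableEq α] [MeasurableSpace α]
    [MeasurableSingletonClass α] {X : ℕ → Ω → α} (hX : ∀ i, Measurable (X i))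
    (hIndep : iIndepFun X μ) (hUnif : ∀ i, μ.map (X i) = uniformOn Set.univ)
    {B K : ℕ} (hB : Fintype.card α = B) (hKB : K ≤ B) :
    (∫ ω, (waitingTime (B - K) (X · ω) : ℝ) ∂μ = B * (H B - H K)) ∧
    ((∫ ω, (waitingTime (B - K) (X · ω) : ℝ) ∂μ) + K = B * (H B - H K) + K) ∧
    ((∫ ω, (waitingTime (B - K) (X · ω) : ℝ) ∂μ) + K) / B = H B - H K + K / B := by
  subst hB
  have expectation := integral_waitingTime hX hIndep hUnif (Nat.sub_le (Fintype.card α) K)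
  rw [Nat.sub_sub_self hKB] at expectation
  have : Nonempty α := μ.nonempty_of_neZero.map (X 0)
  have card_ne_zero : (Fintype.card α : ℝ) ≠ 0 := Nat.cast_ne_zero.2 Fintype.card_ne_zero
  refine ⟨expectation, by rw [expectation], ?_⟩
  rw [expectation, add_div, mul_div_cancel_left₀ _ card_ne_zero]

/-- **Coupon collector with replacement.** If `μ` is a probability measure on `ℕ → Fin B` under
which the draws are independent and uniform on the `B` coupons, and `1 ≤ K ≤ B`, then
`E[T_{B,K}] = B * (H(B) - H(K))`; consequently the mean number of cards obtained by a single
collector who buys until only `K` coupons are missing and then purchases those `K` missing coupons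
directly is `B * (H(B) - H(K)) + K`, and the factor `f = (E[T_{B,K}] + K)/B` equals
`H(B) - H(K) + K/B`. -/
theorem coupon_collector_replacement_expectation
    (B K : ℕ) (hK : 1 ≤ K) (hKB : K ≤ B)
    (μ : Measure (ℕ → Fin B)) [IsProbabilityMeasure μ]
    (hIndep : iIndepFun (fun i (ω : ℕ → Fin B) => ω i) μ)
    (hUnif : ∀ i : ℕ, μ.map (fun ω => ω i) = uniformFin B) :
    (∫ ω, (collectTime B K ω : ℝ) ∂μ = B * (H B - H K)) ∧
    ((∫ ω, (collectTime B K ω : ℝ) ∂μ) + K = B * (H B - H K) + K) ∧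
    ((∫ ω, (collectTime B K ω : ℝ) ∂μ) + K) / B = H B - H K + K / B :=
  coupon_collector_replacement_expectation_general measurable_pi_apply hIndep
    (fun i ↦ (hUnif i).trans (uniformFin_eq_uniformOn_univ B)) (Fintype.card_fin B) hKB
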